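/- arXiv:1504.08352 — 3 statements merged into one kernel-verified Lean document; each statement's English description precedes it below -/
import Mathlib

section
/- Let ε₀ > 0, ε₁ ≥ 5ε₀, and ε₅ ∈ (0,1) be constants with ( (log₂ e)/8 )·ε₅⁴ > 14ε₁. For all sufficiently large n, in the setup: if Σ_{i=1}^n H(X_i | X_1,…,X_{i−1}, Y_1,…,Y_{i−1}) ≥ (1 − 6ε₁/log₂ n)·log₂ k, then the number of variables i ∈ {1,…,n} that are not typical is at most ε₅·n. -/
/-!
Write `p = ρ / n`. The `n` conditional biases `q_i(w)` have weighted total `∑ᵢ E_w q_i(w) = ρ`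
(`sum_qi`), so by concavity the entropy sum is maximal when they all equal `p`. Quantitatively, a
bit of bias `q` has natural entropy at most `q - q log q` (`fEnt_bool_le`), which is the tangent
line `p - q log p` minus the divergence `poisDiv p q = q log (q / p) - q + p ≥ 0`. Summing,
`log 2 · ∑ᵢ αᵢ ≤ ρ + ρ log (n / ρ) - D`, with `D` the total divergence (`sum_alphaE_le`).

A prefix that is not typical has divergence at least `p ε₅² / 9` (`poisDiv_ge`, via the Hellinger
bound), so more than `ε₅ n` variables that are not typical force `D > ρ ε₅⁴ / 9`. On the other
side `log k ≥ ρ + ρ log (n / ρ) - o(ρ)` (`eventually_bounds`) and `log k ≤ ρ log n`, so the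
entropy hypothesis gives `D ≤ (6 ε₁ + o(1)) ρ log 2`. For large `n` this contradicts
`ε₅⁴ / 8 > 14 ε₁ log 2`.

That `S` is nonempty, needed for the probabilities to sum to `1`, follows from the entropy
hypothesis: the entropies of an empty `S` are `0`, while its right-hand side is positive.
-/

open Classical Finset

noncomputable section

/-- Binary entropy function (base 2). -/
def binEnt (p : ℝ) : ℝ := -(p * Real.logb 2 p) - (1 - p) * Real.logb 2 (1 - p)

/-- Entropy (base 2) of the random variable `f` under the uniform distribution on `S`. -/
def fEnt {V B : Type*} [Fintype B] (S : Finset V) (f : V → B) : ℝ :=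
  ∑ b : B,
    -((((S.filter fun v => f v = b).card : ℝ) / (S.card : ℝ)) *
      Real.logb 2 (((S.filter fun v => f v = b).card : ℝ) / (S.card : ℝ)))

/-- Conditional entropy `H(f | g)` under the uniform distribution on `S`. -/
def cEnt {V B C : Type*} [Fintype B] [Fintype C] (S : Finset V) (f : V → B) (g : V → C) : ℝ :=
  ∑ c : C, (((S.filter fun v => g v = c).card : ℝ) / (S.card : ℝ)) *
      fEnt (S.filter fun v => g v = c) f

/-- Probability of the event `P` under the uniform distribution on `S`. -/
def prS {V : Type*} (S : Finset V) (P : V → Prop) : ℝ :=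
  ((S.filter P).card : ℝ) / (S.card : ℝ)

/-- A 2CSP instance on `n` variables over alphabet `A`: an undirected constraint graph
together with a relation on each constraint edge. -/
structure CSP (n : ℕ) (A : Type*) where
  adj : Fin n → Fin n → Prop
  symm : ∀ {i j}, adj i j → adj j i
  irrefl : ∀ i, ¬ adj i i
  rel : Fin n → Fin n → A → A → Prop
  rel_symm : ∀ i j a b, rel i j a b ↔ rel j i b a

/-- ρ = ⌈√n · log log n⌉. -/
def rho (n : ℕ) : ℕ := ⌈Real.sqrt n * Real.logb 2 (Real.logb 2 n)⌉₊

/-- k = C(n, ρ). -/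
def kk (n : ℕ) : ℕ := n.choose (rho n)

/-- N = C(n,ρ)·|A|^ρ, the number of vertices of the product graph. -/
def NN (n a : ℕ) : ℕ := n.choose (rho n) * a ^ (rho n)

/-- k' = k · N^(−ε₀ / log log N). -/
def kprime (n a : ℕ) (ε₀ : ℝ) : ℝ :=
  (kk n : ℝ) * (NN n a : ℝ) ^ (-(ε₀ / Real.logb 2 (Real.logb 2 (NN n a))))

/-- Vertices of the product graph: pairs (T, y) with T ⊆ {1,…,n}, |T| = ρ, y : T → A. -/
abbrev Vtx (n ρ : ℕ) (A : Type*) := Σ T : {T : Finset (Fin n) // T.card = ρ}, (↥T.1 → A)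

variable {n ρ : ℕ} {A : Type*} [Fintype A] [DecidableEq A]

/-- X_i : indicator of the event that variable i is chosen by vertex v. -/
def Xb (v : Vtx n ρ A) (i : Fin n) : Bool := decide (i ∈ v.1.1)

/-- Y_i : value of vertex v on variable i (default a₀ if i is not chosen). -/
def Yv (a₀ : A) (v : Vtx n ρ A) (i : Fin n) : A :=
  if h : i ∈ v.1.1 then v.2 ⟨i, h⟩ else a₀

/-- Type of prefix values: (X₁,…,X_{i},Y₁,…,Y_{i}) padded with defaults. -/
abbrev Pfx (n : ℕ) (A : Type*) := (Fin n → Bool) × (Fin n → A)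

/-- W_{i-1} : the prefix of v consisting of (X_j, Y_j) for j < i (0-indexed cutoff i). -/
def Wp (a₀ : A) (i : ℕ) (v : Vtx n ρ A) : Pfx n A :=
  (fun j => if (j : ℕ) < i then Xb v j else false,
   fun j => if (j : ℕ) < i then Yv a₀ v j else a₀)

/-- q_i = Pr[X_i = 1]. -/
def qi (S : Finset (Vtx n ρ A)) (i : Fin n) : ℝ := prS S (fun v => Xb v i = true)

/-- Pr[w_{i-1}] : probability of the prefix value w. -/
def prW (a₀ : A) (S : Finset (Vtx n ρ A)) (i : ℕ) (w : Pfx n A) : ℝ :=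
  prS S (fun v => Wp a₀ i v = w)

/-- q_i(w_{i-1}) = Pr[X_i = 1 | W_{i-1} = w]. -/
def qiW (a₀ : A) (S : Finset (Vtx n ρ A)) (i : Fin n) (w : Pfx n A) : ℝ :=
  prS (S.filter fun v => Wp a₀ (i : ℕ) v = w) (fun v => Xb v i = true)

/-- α_i = H(X_i | W_{i-1}). -/
def alphaE (a₀ : A) (S : Finset (Vtx n ρ A)) (i : Fin n) : ℝ :=
  cEnt S (fun v => Xb v i) (Wp a₀ (i : ℕ))

/-- β_i = H(Y_i | W_{i-1}, X_i). -/
def betaE (a₀ : A) (S : Finset (Vtx n ρ A)) (i : Fin n) : ℝ :=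
  cEnt S (fun v => Yv a₀ v i) (fun v => (Wp a₀ (i : ℕ) v, Xb v i))

/-- β_i(w_{i-1}) = H(Y_i | X_i, W_{i-1} = w). -/
def betaW (a₀ : A) (S : Finset (Vtx n ρ A)) (i : Fin n) (w : Pfx n A) : ℝ :=
  cEnt (S.filter fun v => Wp a₀ (i : ℕ) v = w) (fun v => Yv a₀ v i) (fun v => Xb v i)

/-- A good index: α_i ≥ H(q_i) − 2q_i·log|A| and β_i ≥ (1/2)ε₁q_i. -/
def GoodIdx (a₀ : A) (S : Finset (Vtx n ρ A)) (ε₁ : ℝ) (i : Fin n) : Prop :=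
  alphaE a₀ S i ≥ binEnt (qi S i) - 2 * qi S i * Real.logb 2 (Fintype.card A) ∧
  betaE a₀ S i ≥ (1 / 2) * ε₁ * qi S i

/-- Neighborhood relation of the i-th prefix graph (self-loops included): two prefixes are
neighbors iff wherever both choose a variable j < i they assign it the same label. -/
def PfxNbr (n : ℕ) (A : Type*) (i : ℕ) (w σ' : Pfx n A) : Prop :=
  ∀ j : Fin n, (j : ℕ) < i → w.1 j = true → σ'.1 j = true → w.2 j = σ'.2 j

/-- A good prefix. -/
def GoodPfx (a₀ : A) (S : Finset (Vtx n ρ A)) (ε₁ ε₂ ε₃ : ℝ) (i : Fin n) (w : Pfx n A) : Prop :=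
  GoodIdx a₀ S ε₁ i ∧
  (∑ σ' : Pfx n A, if PfxNbr n A (i : ℕ) w σ' then prW a₀ S (i : ℕ) σ' * qiW a₀ S i σ' else 0)
      ≥ (1 - ε₂) * qi S i ∧
  betaW a₀ S i w ≥ ε₃ * qiW a₀ S i w

/-- A vertex violating an internal 2CSP constraint (an isolated vertex). -/
def Violates (ψ : CSP n A) (v : Vtx n ρ A) : Prop :=
  ∃ i j, ∃ (hi : i ∈ v.1.1) (hj : j ∈ v.1.1),
    ψ.adj i j ∧ ¬ ψ.rel i j (v.2 ⟨i, hi⟩) (v.2 ⟨j, hj⟩)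

/-- Adjacency in the product graph G_ψ: both endpoints are non-isolated, they agree on
common variables, and all cross 2CSP constraints are satisfied. -/
def PAdj (ψ : CSP n A) (u v : Vtx n ρ A) : Prop :=
  ¬ Violates ψ u ∧ ¬ Violates ψ v ∧
  (∀ i, ∀ (hu : i ∈ u.1.1) (hv : i ∈ v.1.1), u.2 ⟨i, hu⟩ = v.2 ⟨i, hv⟩) ∧
  (∀ i j, ∀ (hu : i ∈ u.1.1) (hv : j ∈ v.1.1), ψ.adj i j → ψ.rel i j (u.2 ⟨i, hu⟩) (v.2 ⟨j, hv⟩))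

/-- den(S) : the edge density of S in the product graph. -/
def den (ψ : CSP n A) (S : Finset (Vtx n ρ A)) : ℝ :=
  (((S ×ˢ S).filter fun p => PAdj ψ p.1 p.2).card : ℝ) / ((S.card : ℝ) ^ 2)

/-- den(G_{i+1}) : weighted density of the prefix graph with cutoff i. -/
def pfxDen (a₀ : A) (S : Finset (Vtx n ρ A)) (i : ℕ) : ℝ :=
  ∑ w : Pfx n A, ∑ σ' : Pfx n A,
    if PfxNbr n A i w σ' then prW a₀ S i w * prW a₀ S i σ' else 0

/-- Number of (ordered) satisfied constraint pairs for assignment τ. -/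
def nSat (ψ : CSP n A) (τ : Fin n → A) : ℕ :=
  ((univ ×ˢ univ : Finset (Fin n × Fin n)).filter fun p =>
    ψ.adj p.1 p.2 ∧ ψ.rel p.1 p.2 (τ p.1) (τ p.2)).card

/-- Number of (ordered) constraint pairs. -/
def nEdg (ψ : CSP n A) : ℕ :=
  ((univ ×ˢ univ : Finset (Fin n × Fin n)).filter fun p => ψ.adj p.1 p.2).card

/-- The constraint graph is d-regular. -/
def Regular (ψ : CSP n A) (d : ℕ) : Prop :=
  ∀ i, ((univ : Finset (Fin n)).filter fun j => ψ.adj i j).card = d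

/-- A typical prefix: (1−ε₅)ρ/n < q_i(w) < (1+ε₅)ρ/n. -/
def TypPfx (a₀ : A) (S : Finset (Vtx n ρ A)) (ε₅ : ℝ) (i : Fin n) (w : Pfx n A) : Prop :=
  (1 - ε₅) * ((ρ : ℝ) / (n : ℝ)) < qiW a₀ S i w ∧ qiW a₀ S i w < (1 + ε₅) * ((ρ : ℝ) / (n : ℝ))

/-- A typical variable: typical prefixes have total probability at least 1−ε₅. -/
def TypVar (a₀ : A) (S : Finset (Vtx n ρ A)) (ε₅ : ℝ) (i : Fin n) : Prop :=
  (∑ w : Pfx n A, if TypPfx a₀ S ε₅ i w then prW a₀ S (i : ℕ) w else 0) ≥ 1 - ε₅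

/-- I(u,v) : the number of tests between u and v (ordered pairs (i,j) forming a constraint
edge between typical variables, chosen with typical prefixes by u, v respectively). -/
def Icnt (ψ : CSP n A) (a₀ : A) (S : Finset (Vtx n ρ A)) (ε₅ : ℝ) (u v : Vtx n ρ A) : ℕ :=
  ((univ ×ˢ univ : Finset (Fin n × Fin n)).filter fun p =>
    ψ.adj p.1 p.2 ∧ TypVar a₀ S ε₅ p.1 ∧ TypVar a₀ S ε₅ p.2 ∧
    Xb u p.1 = true ∧ Xb v p.2 = true ∧
    TypPfx a₀ S ε₅ p.1 (Wp a₀ (p.1 : ℕ) u) ∧ TypPfx a₀ S ε₅ p.2 (Wp a₀ (p.2 : ℕ) v)).card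

/-- I^T(i,j) : the number of tests of the constraint (i,j) over pairs of S. -/
def ITop (a₀ : A) (S : Finset (Vtx n ρ A)) (ε₅ : ℝ) (i j : Fin n) : ℕ :=
  ((S ×ˢ S).filter fun p =>
    Xb p.1 i = true ∧ Xb p.2 j = true ∧
    TypPfx a₀ S ε₅ i (Wp a₀ (i : ℕ) p.1) ∧ TypPfx a₀ S ε₅ j (Wp a₀ (j : ℕ) p.2)).card

/-- E_{u,v}[I(u,v)] for u,v independent uniform on S. -/
def EI (ψ : CSP n A) (a₀ : A) (S : Finset (Vtx n ρ A)) (ε₅ : ℝ) : ℝ :=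
  (∑ u ∈ S, ∑ v ∈ S, (Icnt ψ a₀ S ε₅ u v : ℝ)) / ((S.card : ℝ) ^ 2)

/-- E_{u,v}[I(u,v)²] for u,v independent uniform on S. -/
def EI2 (ψ : CSP n A) (a₀ : A) (S : Finset (Vtx n ρ A)) (ε₅ : ℝ) : ℝ :=
  (∑ u ∈ S, ∑ v ∈ S, (Icnt ψ a₀ S ε₅ u v : ℝ) ^ 2) / ((S.card : ℝ) ^ 2)

end

/-! ### Asymptotics of `ρ` and of the binomial coefficient -/

/-- The upper half of Stirling's formula, with an error term `log m + 1` that is `o(m)`. -/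
theorem log_factorial_le (m : ℕ) (hm : 1 ≤ m) :
    Real.log (m.factorial : ℝ) ≤ m * Real.log m - m + Real.log m + 1 := by
  induction m, hm using Nat.le_induction with
  | base => simp
  | succ m hm ih =>
    have hm0 : (0 : ℝ) < m := by exact_mod_cast hm
    have h1 : 1 / ((m : ℝ) + 1) ≤ Real.log (m + 1) - Real.log m := by
      rw [← Real.log_div (by positivity) hm0.ne']
      have := Real.one_sub_inv_le_log_of_pos (x := ((m : ℝ) + 1) / m) (by positivity)
      refine le_trans (le_of_eq ?_) this
      field_simp
      ring
    have h2 : 1 ≤ ((m : ℝ) + 1) * (Real.log (m + 1) - Real.log m) := by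
      rw [div_le_iff₀ (by positivity)] at h1
      linarith
    rw [Nat.factorial_succ]
    push_cast
    rw [Real.log_mul (by positivity) (by positivity)]
    nlinarith

/-- Lower bound for a binomial coefficient that is sharp up to `o(r)` when `r → ∞`, `r / n → 0`. -/
theorem log_choose_ge (n r : ℕ) (hr : 1 ≤ r) (hrn : r < n) :
    r + r * Real.log (n / r) - (-(r * Real.log (1 - (r : ℝ) / n)) + Real.log r + 1)
      ≤ Real.log (n.choose r : ℝ) := by
  have hr0 : (0 : ℝ) < r := by exact_mod_cast hr
  have hrn' : (r : ℝ) < n := by exact_mod_cast hrn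
  have hn0 : (0 : ℝ) < n := hr0.trans hrn'
  have h1 : ((n : ℝ) - r) ^ r ≤ (r.factorial : ℝ) * n.choose r := by
    have h := Nat.pow_sub_le_descFactorial n r
    rw [Nat.descFactorial_eq_factorial_mul_choose] at h
    have h' : ((n + 1 - r : ℕ) : ℝ) ^ r ≤ (r.factorial : ℝ) * n.choose r := by exact_mod_cast h
    refine le_trans ?_ h'
    rw [Nat.cast_sub (by omega)]
    push_cast
    exact pow_le_pow_left₀ (by linarith) (by linarith) _
  have hc : (0 : ℝ) < n.choose r := by exact_mod_cast Nat.choose_pos hrn.le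
  have h2 := Real.log_le_log (pow_pos (by linarith) r) h1
  rw [Real.log_pow, Real.log_mul (by positivity) hc.ne'] at h2
  have h3 := log_factorial_le r hr
  have h4 : Real.log ((n : ℝ) - r) = Real.log n + Real.log (1 - (r : ℝ) / n) := by
    rw [← Real.log_mul hn0.ne' (sub_pos.2 ((div_lt_one hn0).2 hrn')).ne']
    congr 1
    field_simp
  rw [Real.log_div hn0.ne' hr0.ne']
  rw [h4] at h2
  linarith

theorem log_choose_le (n r : ℕ) (hrn : r ≤ n) :
    Real.log (n.choose r : ℝ) ≤ r * Real.log n := by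
  have hc : (0 : ℝ) < n.choose r := by exact_mod_cast Nat.choose_pos hrn
  rw [← Real.log_pow]
  exact Real.log_le_log hc (by exact_mod_cast Nat.choose_le_pow n r)

open Filter Topology in
theorem tendsto_rho_div :
    Tendsto (fun n : ℕ => (rho n : ℝ) / n) atTop (𝓝 0) := by
  -- `log₂ log₂ n ≤ log n / (log 2)²` reduces the claim to `log n / √n → 0`; the summand `1 / n`
  -- in `hub` pays for the ceiling in `rho`
  have hll : Tendsto (fun x : ℝ => Real.log x / Real.sqrt x) atTop (𝓝 0) := by
    have := (isLittleO_log_rpow_atTop (r := 1 / 2) (by norm_num)).tendsto_div_nhds_zero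
    simpa [Real.sqrt_eq_rpow] using this
  have h2 : (0 : ℝ) < Real.log 2 := Real.log_pos (by norm_num)
  have hub : Tendsto (fun n : ℕ => (Real.log n / Real.sqrt n) * (Real.log 2)⁻¹ * (Real.log 2)⁻¹
      + 1 / (n : ℝ)) atTop (𝓝 0) := by
    have h := ((hll.comp tendsto_natCast_atTop_atTop).mul_const (Real.log 2)⁻¹).mul_const
      (Real.log 2)⁻¹
    have h' := h.add tendsto_one_div_atTop_nhds_zero_nat
    simpa using h'
  refine squeeze_zero' (Eventually.of_forall fun n => by positivity) ?_ hub
  filter_upwards [eventually_ge_atTop 4] with n hn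
  have hn0 : (0 : ℝ) < n := by positivity
  have hn4 : (4 : ℝ) ≤ n := by exact_mod_cast hn
  have hs : 0 < Real.sqrt n := Real.sqrt_pos.2 hn0
  have hL1 : 2 ≤ Real.logb 2 n := by
    rw [Real.le_logb_iff_rpow_le (by norm_num) hn0]
    norm_num; linarith
  have hL2 : 0 ≤ Real.logb 2 (Real.logb 2 n) :=
    Real.logb_nonneg (by norm_num) (by linarith)
  have hL3 : Real.logb 2 (Real.logb 2 n) ≤ Real.log n * (Real.log 2)⁻¹ * (Real.log 2)⁻¹ := by
    have : Real.log (Real.logb 2 n) ≤ Real.logb 2 n :=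
      (Real.log_le_sub_one_of_pos (by linarith)).trans (by linarith)
    calc Real.logb 2 (Real.logb 2 n) = Real.log (Real.logb 2 n) * (Real.log 2)⁻¹ := by
          rw [Real.logb, div_eq_mul_inv]
      _ ≤ Real.logb 2 n * (Real.log 2)⁻¹ := by gcongr
      _ = _ := by rw [Real.logb, div_eq_mul_inv]
  have hceil : (rho n : ℝ) ≤ Real.sqrt n * Real.logb 2 (Real.logb 2 n) + 1 :=
    (Nat.ceil_lt_add_one (by positivity)).le
  calc (rho n : ℝ) / n
      ≤ (Real.sqrt n * (Real.log n * (Real.log 2)⁻¹ * (Real.log 2)⁻¹) + 1) / n := by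
        gcongr
        exact hceil.trans (by gcongr)
    _ = _ := by
        rw [add_div]
        congr 1
        have : Real.sqrt n * Real.sqrt n = n := Real.mul_self_sqrt hn0.le
        field_simp
        rw [sq, this, mul_comm]

open Filter Topology in
theorem tendsto_rho : Tendsto (fun n : ℕ => (rho n : ℝ)) atTop atTop := by
  refine tendsto_atTop_mono' _ ?_ (Real.tendsto_sqrt_atTop.comp tendsto_natCast_atTop_atTop)
  filter_upwards [eventually_ge_atTop 4] with n hn
  have hn4 : (4 : ℝ) ≤ n := by exact_mod_cast hn
  have hL1 : 2 ≤ Real.logb 2 n := by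
    rw [Real.le_logb_iff_rpow_le (by norm_num) (by linarith)]
    norm_num; linarith
  have hL2 : 1 ≤ Real.logb 2 (Real.logb 2 n) := by
    rw [Real.le_logb_iff_rpow_le (by norm_num) (by linarith)]
    simpa using hL1
  calc Real.sqrt n = Real.sqrt n * 1 := (mul_one _).symm
    _ ≤ Real.sqrt n * Real.logb 2 (Real.logb 2 n) := by gcongr
    _ ≤ _ := Nat.le_ceil _

open Filter Topology in
/-- Eventually `1 ≤ ρ < n`, and `log k ≥ ρ + ρ log (n / ρ) - o(ρ)`, with the error term written as
`δ ρ` for an arbitrary `δ > 0`. -/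
theorem eventually_bounds (δ : ℝ) (hδ : 0 < δ) : ∀ᶠ n : ℕ in atTop,
    1 ≤ rho n ∧ rho n < n ∧
    (rho n : ℝ) + rho n * Real.log (n / rho n) - δ * rho n ≤ Real.log (kk n : ℝ) := by
  have hlog : Tendsto (fun n : ℕ => Real.log (1 - (rho n : ℝ) / n)) atTop (𝓝 0) := by
    have h := tendsto_rho_div.const_sub 1
    have := h.log (by norm_num)
    simpa using this
  have hsm : Tendsto (fun n : ℕ => (Real.log (rho n) + 1) / (rho n : ℝ)) atTop (𝓝 0) := by
    have h1 : Tendsto (fun x : ℝ => Real.log x / x) atTop (𝓝 0) :=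
      Real.isLittleO_log_id_atTop.tendsto_div_nhds_zero
    have h2 := (h1.add tendsto_inv_atTop_zero).comp tendsto_rho
    refine (h2.congr fun n => ?_).trans (by simp)
    simp [add_div]
  filter_upwards [hlog.eventually_const_lt (u := -(δ / 2)) (by linarith),
    hsm.eventually_lt_const (u := δ / 2) (by linarith),
    tendsto_rho.eventually_ge_atTop 1,
    tendsto_rho_div.eventually_lt_const (u := 1) (by norm_num),
    eventually_ge_atTop 1] with n h1 h2 h3 h4 h5
  have hr : 1 ≤ rho n := by exact_mod_cast h3
  have hn0 : (0 : ℝ) < n := by exact_mod_cast h5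
  have hrn : rho n < n := by
    rw [div_lt_one hn0] at h4
    exact_mod_cast h4
  refine ⟨hr, hrn, le_trans ?_ (log_choose_ge n (rho n) hr hrn)⟩
  rw [div_lt_iff₀ (by linarith)] at h2
  nlinarith

/-! ### Poisson divergence and the entropy of a biased bit -/

/-- The Poisson relative entropy `q log (q / p) - q + p`, to which the binary relative entropy
reduces for small `p`; at `q = 0` the convention `0 log 0 = 0` holds. -/
noncomputable def poisDiv (p q : ℝ) : ℝ := q * Real.log q - q * Real.log p - q + p

/-- Lower bound of the divergence by a Hellinger distance. -/
theorem poisDiv_ge_hellinger {p q : ℝ} (hp : 0 < p) (hq : 0 ≤ q) :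
    p * (Real.sqrt (q / p) - 1) ^ 2 ≤ poisDiv p q := by
  rcases hq.eq_or_lt with rfl | hq
  · simp [poisDiv]
  · set s := Real.sqrt (q / p) with hs
    have hs0 : 0 < s := Real.sqrt_pos.2 (by positivity)
    have hs2 : s ^ 2 = q / p := Real.sq_sqrt (by positivity)
    have hq' : q = p * s ^ 2 := by rw [hs2]; field_simp
    have hl : Real.log q = Real.log p + 2 * Real.log s := by
      rw [hq', Real.log_mul hp.ne' (by positivity), Real.log_pow]; norm_num
    have h1 := Real.one_sub_inv_le_log_of_pos hs0
    have h2 : s ^ 2 - s ≤ s ^ 2 * Real.log s := by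
      calc s ^ 2 - s = s ^ 2 * (1 - s⁻¹) := by field_simp
        _ ≤ _ := by gcongr
    rw [poisDiv, hl, hq']
    nlinarith

theorem poisDiv_nonneg {p q : ℝ} (hp : 0 < p) (hq : 0 ≤ q) : 0 ≤ poisDiv p q :=
  le_trans (by positivity) (poisDiv_ge_hellinger hp hq)

theorem poisDiv_ge {p q ε : ℝ} (hp : 0 < p) (hq : 0 ≤ q) (hε : 0 < ε) (hε1 : ε < 1)
    (h : ¬ ((1 - ε) * p < q ∧ q < (1 + ε) * p)) : p * (ε ^ 2 / 9) ≤ poisDiv p q := by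
  refine le_trans ?_ (poisDiv_ge_hellinger hp hq)
  refine mul_le_mul_of_nonneg_left ?_ hp.le
  set s := Real.sqrt (q / p) with hs
  have hs0 : 0 ≤ s := Real.sqrt_nonneg _
  have hs2 : s ^ 2 = q / p := Real.sq_sqrt (by positivity)
  by_cases h1 : (1 - ε) * p < q
  · have h2 : (1 + ε) * p ≤ q := by
      by_contra h3
      exact h ⟨h1, not_le.1 h3⟩
    rw [← le_div_iff₀ hp, ← hs2] at h2
    have : 1 + ε / 3 ≤ s := by
      by_contra! h3
      nlinarith
    nlinarith
  · rw [not_lt, ← div_le_iff₀ hp, ← hs2] at h1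
    have : s ≤ 1 - ε / 2 := by
      by_contra! h3
      nlinarith
    nlinarith

theorem prS_nonneg {V : Type*} (S : Finset V) (P : V → Prop) : 0 ≤ prS S P := by
  unfold prS; positivity

/-- `prS` with an arbitrary decidability instance in place of the classical one. -/
theorem prS_eq {V : Type*} (S : Finset V) (P : V → Prop) [DecidablePred P] :
    prS S P = ((S.filter P).card : ℝ) / S.card := by
  unfold prS
  congr!

/-- The entropy of a bit with bias `q` is at most `(q - q log q) / log 2`. -/
theorem fEnt_bool_le {V : Type*} (S : Finset V) (f : V → Bool) :
    fEnt S f * Real.log 2 ≤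
      prS S (fun v => f v = true) - prS S (fun v => f v = true) *
        Real.log (prS S (fun v => f v = true)) := by
  have h2 : Real.log 2 ≠ 0 := (Real.log_pos (by norm_num)).ne'
  rcases S.eq_empty_or_nonempty with rfl | hS
  · simp [fEnt, prS]
  have hc : (0 : ℝ) < S.card := by exact_mod_cast hS.card_pos
  have hsum : prS S (fun v => f v = true) + prS S (fun v => f v = false) = 1 := by
    rw [prS_eq, prS_eq, ← add_div, div_eq_one_iff_eq hc.ne']
    have h := Finset.card_filter_add_card_filter_not (s := S) (fun v => f v = true)
    simp only [Bool.not_eq_true] at h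
    rw [← h]
    push_cast
    congr!
  have hf : fEnt S f = -(prS S (fun v => f v = true) * Real.logb 2 (prS S (fun v => f v = true)))
      + -(prS S (fun v => f v = false) * Real.logb 2 (prS S (fun v => f v = false))) := by
    simp only [fEnt, prS, Fintype.sum_bool]
  have h0 := prS_nonneg S (fun v => f v = false)
  set q := prS S (fun v => f v = true)
  set q' := prS S (fun v => f v = false)
  have key : -(q' * Real.log q') ≤ q := by
    rcases h0.eq_or_lt with h0 | h0
    · rw [← h0] at hsum ⊢
      simp; linarith
    · have h1 := Real.one_sub_inv_le_log_of_pos h0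
      have : q' * (1 - q'⁻¹) ≤ q' * Real.log q' := by gcongr
      rw [mul_sub, mul_inv_cancel₀ h0.ne'] at this
      linarith
  rw [hf]
  simp only [Real.logb]
  field_simp
  linarith

/-! ### Conditioning on prefixes -/

section Prefix

variable {n ρ : ℕ} {A : Type*} [Fintype A] [DecidableEq A]

theorem sum_prW (a₀ : A) (S : Finset (Vtx n ρ A)) (hS : S.Nonempty) (i : ℕ) :
    ∑ w : Pfx n A, prW a₀ S i w = 1 := by
  have hc : (0 : ℝ) < S.card := by exact_mod_cast hS.card_pos
  simp only [prW, prS]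
  rw [← Finset.sum_div, div_eq_one_iff_eq hc.ne']
  have h := Finset.card_eq_sum_card_fiberwise (s := S) (t := univ) (f := Wp a₀ i)
    (fun _ _ => by simp)
  rw [h]
  push_cast
  refine Finset.sum_congr rfl fun w _ => ?_
  congr!

theorem prW_mul_qiW (a₀ : A) (S : Finset (Vtx n ρ A)) (i : Fin n) (w : Pfx n A) :
    prW a₀ S (i : ℕ) w * qiW a₀ S i w =
      (((S.filter fun v => Xb v i = true).filter fun v => Wp a₀ (i : ℕ) v = w).card : ℝ)
        / S.card := by
  rw [Finset.filter_comm, prW, qiW, prS_eq, prS_eq]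
  by_cases h : ((S.filter fun v => Wp a₀ (i : ℕ) v = w).card : ℝ) = 0
  · have h' : S.filter (fun v => Wp a₀ (i : ℕ) v = w) = ∅ := by
      simpa [Finset.card_eq_zero] using h
    simp [h']
  · rw [mul_comm, div_mul_div_cancel₀ h]

theorem sum_prW_mul_qiW (a₀ : A) (S : Finset (Vtx n ρ A)) (i : Fin n) :
    ∑ w : Pfx n A, prW a₀ S (i : ℕ) w * qiW a₀ S i w = qi S i := by
  simp only [prW_mul_qiW, qi]
  rw [prS_eq, ← Finset.sum_div]
  congr 1
  have h := Finset.card_eq_sum_card_fiberwise (s := S.filter fun v => Xb v i = true)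
    (t := univ) (f := Wp a₀ (i : ℕ)) (fun _ _ => by simp)
  have h' : ((S.filter fun v => Xb v i = true).card : ℝ) = _ := congrArg Nat.cast h
  push_cast at h'
  convert h'.symm using 2

/-- Each vertex chooses exactly `ρ` variables. -/
theorem sum_qi (S : Finset (Vtx n ρ A)) (hS : S.Nonempty) :
    ∑ i : Fin n, qi S i = ρ := by
  have hc : (0 : ℝ) < S.card := by exact_mod_cast hS.card_pos
  simp only [qi, prS_eq]
  rw [← Finset.sum_div, div_eq_iff hc.ne']
  have h1 : ∀ v ∈ S, ∑ i : Fin n, (if Xb v i = true then (1 : ℝ) else 0) = ρ := by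
    intro v _
    rw [Finset.sum_boole]
    have : (univ.filter fun i : Fin n => Xb v i = true) = v.1.1 := by
      ext i; simp [Xb]
    rw [this, v.1.2]
  simp only [← Finset.sum_boole]
  rw [Finset.sum_comm, Finset.sum_congr rfl h1]
  simp [mul_comm]

theorem alphaE_eq (a₀ : A) (S : Finset (Vtx n ρ A)) (i : Fin n) :
    alphaE a₀ S i = ∑ w : Pfx n A, prW a₀ S (i : ℕ) w *
      fEnt (S.filter fun v => Wp a₀ (i : ℕ) v = w) (fun v => Xb v i) := by
  unfold alphaE cEnt prW prS
  congr!

/-- The conditional entropy lies below the tangent line at any `p`, by the expected divergence. The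
bound is used with `p = ρ / n`, where the tangent lines sum to `ρ + ρ log (n / ρ)`. -/
theorem alphaE_le (a₀ : A) (S : Finset (Vtx n ρ A)) (hS : S.Nonempty) (i : Fin n) (p : ℝ) :
    alphaE a₀ S i * Real.log 2 ≤ p - qi S i * Real.log p
      - ∑ w : Pfx n A, prW a₀ S (i : ℕ) w * poisDiv p (qiW a₀ S i w) := by
  have hterm : ∀ w : Pfx n A,
      prW a₀ S (i : ℕ) w * fEnt (S.filter fun v => Wp a₀ (i : ℕ) v = w) (fun v => Xb v i)
        * Real.log 2 ≤
      prW a₀ S (i : ℕ) w * p - prW a₀ S (i : ℕ) w * qiW a₀ S i w * Real.log p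
        - prW a₀ S (i : ℕ) w * poisDiv p (qiW a₀ S i w) := by
    intro w
    have h := fEnt_bool_le (S.filter fun v => Wp a₀ (i : ℕ) v = w) (fun v => Xb v i)
    have h' := mul_le_mul_of_nonneg_left h (prS_nonneg S fun v => Wp a₀ (i : ℕ) v = w)
    have hP : prS S (fun v => Wp a₀ (i : ℕ) v = w) = prW a₀ S (i : ℕ) w := rfl
    have hq : prS (S.filter fun v => Wp a₀ (i : ℕ) v = w) (fun v => Xb v i = true)
      = qiW a₀ S i w := rfl
    rw [hP, hq] at h'
    rw [poisDiv]
    linarith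
  have hs := Finset.sum_le_sum fun w (_ : w ∈ (univ : Finset (Pfx n A))) => hterm w
  rw [← Finset.sum_mul, Finset.sum_sub_distrib, Finset.sum_sub_distrib, ← Finset.sum_mul,
    ← Finset.sum_mul, sum_prW a₀ S hS, sum_prW_mul_qiW, one_mul] at hs
  rwa [← alphaE_eq] at hs

/-- A variable that is not typical contributes divergence at least `p ε³ / 9`. -/
theorem div_of_not_typVar (a₀ : A) (S : Finset (Vtx n ρ A)) (hS : S.Nonempty) (i : Fin n)
    {ε : ℝ} (hε : 0 < ε) (hε1 : ε < 1) (hp : 0 < (ρ : ℝ) / n) (hi : ¬ TypVar a₀ S ε i) :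
    ε * ((ρ : ℝ) / n * (ε ^ 2 / 9)) ≤
      ∑ w : Pfx n A, prW a₀ S (i : ℕ) w * poisDiv ((ρ : ℝ) / n) (qiW a₀ S i w) := by
  have hsum := sum_prW a₀ S hS (i : ℕ)
  have hlt : ε ≤ ∑ w : Pfx n A,
      (if TypPfx a₀ S ε i w then 0 else prW a₀ S (i : ℕ) w) := by
    have hsplit : (∑ w : Pfx n A, if TypPfx a₀ S ε i w then prW a₀ S (i : ℕ) w else 0)
        + (∑ w : Pfx n A, if TypPfx a₀ S ε i w then 0 else prW a₀ S (i : ℕ) w) = 1 := by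
      rw [← hsum, ← Finset.sum_add_distrib]
      refine Finset.sum_congr rfl fun w _ => ?_
      split_ifs <;> simp
    have hi' := not_le.1 hi
    linarith
  calc ε * ((ρ : ℝ) / n * (ε ^ 2 / 9))
      ≤ (∑ w : Pfx n A, (if TypPfx a₀ S ε i w then 0 else prW a₀ S (i : ℕ) w))
        * ((ρ : ℝ) / n * (ε ^ 2 / 9)) := by gcongr
    _ ≤ _ := by
      rw [Finset.sum_mul]
      refine Finset.sum_le_sum fun w _ => ?_
      have hP : 0 ≤ prW a₀ S (i : ℕ) w := prS_nonneg _ _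
      have hq : 0 ≤ qiW a₀ S i w := prS_nonneg _ _
      split_ifs with h
      · rw [zero_mul]
        exact mul_nonneg hP (poisDiv_nonneg hp hq)
      · exact mul_le_mul_of_nonneg_left (poisDiv_ge hp hq hε hε1 h) hP

/-- The entropy deficit forced by the variables that are not typical. -/
theorem sum_alphaE_le (a₀ : A) (S : Finset (Vtx n ρ A)) (hS : S.Nonempty)
    {ε : ℝ} (hε : 0 < ε) (hε1 : ε < 1) (hρ : 1 ≤ ρ) (hn : ρ < n) :
    (∑ i : Fin n, alphaE a₀ S i) * Real.log 2 ≤ ρ + ρ * Real.log (n / ρ)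
      - ((univ.filter fun i : Fin n => ¬ TypVar a₀ S ε i).card : ℝ)
        * (ε * ((ρ : ℝ) / n * (ε ^ 2 / 9))) := by
  have hρ0 : (0 : ℝ) < ρ := by exact_mod_cast hρ
  have hn0 : (0 : ℝ) < n := by exact_mod_cast (by omega : 0 < n)
  have hp : 0 < (ρ : ℝ) / n := by positivity
  have hs := Finset.sum_le_sum fun i (_ : i ∈ (univ : Finset (Fin n))) =>
    alphaE_le a₀ S hS i ((ρ : ℝ) / n)
  rw [← Finset.sum_mul, Finset.sum_sub_distrib, Finset.sum_sub_distrib, ← Finset.sum_mul,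
    sum_qi S hS, Finset.sum_const, Finset.card_univ, Fintype.card_fin, nsmul_eq_mul,
    mul_div_cancel₀ _ hn0.ne', ← inv_div (n : ℝ) (ρ : ℝ), Real.log_inv, inv_div] at hs
  have hD : ((univ.filter fun i : Fin n => ¬ TypVar a₀ S ε i).card : ℝ)
        * (ε * ((ρ : ℝ) / n * (ε ^ 2 / 9))) ≤
      ∑ i : Fin n, ∑ w : Pfx n A,
        prW a₀ S (i : ℕ) w * poisDiv ((ρ : ℝ) / n) (qiW a₀ S i w) := by
    rw [← nsmul_eq_mul]
    refine (Finset.card_nsmul_le_sum _ _ _ fun i hi =>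
      div_of_not_typVar a₀ S hS i hε hε1 hp (Finset.mem_filter.1 hi).2).trans ?_
    exact Finset.sum_le_sum_of_subset_of_nonneg (Finset.filter_subset _ _) fun i _ _ =>
      Finset.sum_nonneg fun w _ =>
        mul_nonneg (prS_nonneg _ _) (poisDiv_nonneg hp (prS_nonneg _ _))
  linarith

end Prefix

/-! ### The theorem -/

/-- Claim 4.13: if Σ H(X_i | X_{<i}, Y_{<i}) ≥ (1 − 6ε₁/log₂ n)·log₂ k,
then at most ε₅·n variables are not typical. -/
theorem statement_12 (A : Type) [Fintype A] [DecidableEq A] (hA : 2 ≤ Fintype.card A)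
    (ε₀ ε₁ ε₅ : ℝ) (hε₀ : 0 < ε₀) (hε₁ : ε₁ ≥ 5 * ε₀) (hε₅ : 0 < ε₅ ∧ ε₅ < 1)
    (hbig : Real.logb 2 (Real.exp 1) / 8 * ε₅ ^ 4 > 14 * ε₁) :
    ∃ n₀ : ℕ, ∀ n ≥ n₀, ∀ (ψ : CSP n A) (a₀ : A) (S : Finset (Vtx n (rho n) A)),
      S.card = ⌊kprime n (Fintype.card A) ε₀⌋₊ →
      (∑ i : Fin n, alphaE a₀ S i) ≥
        (1 - 6 * ε₁ / Real.logb 2 n) * Real.logb 2 (kk n) →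
      ((Finset.univ.filter fun i : Fin n => ¬ TypVar a₀ S ε₅ i).card : ℝ) ≤ ε₅ * n := by
  obtain ⟨hε, hε1⟩ := hε₅
  have hl2 : 0 < Real.log 2 := Real.log_pos (by norm_num)
  have he1 : 0 < ε₁ := by linarith
  have hbig' : 14 * ε₁ * Real.log 2 < ε₅ ^ 4 / 8 := by
    rw [Real.logb, Real.log_exp] at hbig
    have h := mul_lt_mul_of_pos_right hbig hl2
    field_simp at h
    linarith
  have hlogtop : Filter.Tendsto (fun n : ℕ => Real.logb 2 (n : ℝ)) Filter.atTop Filter.atTop :=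
    (Real.tendsto_logb_atTop (by norm_num)).comp tendsto_natCast_atTop_atTop
  obtain ⟨n₀, hn₀⟩ := Filter.eventually_atTop.1
    ((eventually_bounds (ε₁ * Real.log 2) (by positivity)).and
      (hlogtop.eventually_gt_atTop (6 * ε₁)))
  refine ⟨n₀, fun n hn _ a₀ S _ hα => ?_⟩
  obtain ⟨⟨hr, hrn, hk⟩, hlog⟩ := hn₀ n hn
  have hr0 : (0 : ℝ) < rho n := by exact_mod_cast hr
  have hn0 : (0 : ℝ) < n := by exact_mod_cast (by omega : 0 < n)
  have hL : 0 < Real.logb 2 (n : ℝ) := by linarith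
  -- for empty `S` every `alphaE` vanishes, while the assumed lower bound is positive
  have hS : S.Nonempty := by
    rw [Finset.nonempty_iff_ne_empty]
    rintro rfl
    have h0 : ∑ i : Fin n, alphaE a₀ (∅ : Finset (Vtx n (rho n) A)) i = 0 := by
      simp [alphaE, cEnt]
    have hkk : 1 < kk n := by
      have h1 := Nat.choose_pos hrn.le
      have h2 : n.choose (rho n) ≠ 1 := by
        rw [Ne, Nat.choose_eq_one_iff]
        omega
      unfold kk
      omega
    have h3 : 0 < Real.logb 2 (kk n) := Real.logb_pos (by norm_num) (by exact_mod_cast hkk)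
    have h4 : 0 < 1 - 6 * ε₁ / Real.logb 2 n := by
      rw [sub_pos, div_lt_one hL]
      exact hlog
    rw [h0] at hα
    exact absurd hα (not_le.2 (mul_pos h4 h3))
  have hup := sum_alphaE_le a₀ S hS hε hε1 hr hrn
  have hlow : Real.log (kk n) - 6 * ε₁ * (rho n * Real.log 2) ≤
      (∑ i : Fin n, alphaE a₀ S i) * Real.log 2 := by
    have hc : Real.log (kk n) ≤ rho n * Real.log n := log_choose_le n (rho n) hrn.le
    have hln : 0 < Real.log n := by
      have : Real.log n = Real.logb 2 n * Real.log 2 := by rw [Real.logb]; field_simp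
      rw [this]; positivity
    refine le_trans ?_ (mul_le_mul_of_nonneg_right hα hl2.le)
    have he : (1 - 6 * ε₁ / Real.logb 2 n) * Real.logb 2 (kk n) * Real.log 2
        = Real.log (kk n) - 6 * ε₁ * (Real.log (kk n) / Real.log n * Real.log 2) := by
      simp only [Real.logb]
      field_simp
    rw [he]
    have : Real.log (kk n) / Real.log n ≤ rho n := (div_le_iff₀ hln).2 hc
    gcongr
  by_contra! hcon
  have hB : ε₅ * n * (ε₅ * ((rho n : ℝ) / n * (ε₅ ^ 2 / 9))) ≤
      ((univ.filter fun i : Fin n => ¬ TypVar a₀ S ε₅ i).card : ℝ)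
        * (ε₅ * ((rho n : ℝ) / n * (ε₅ ^ 2 / 9))) := by gcongr
  have hB' : ε₅ * n * (ε₅ * ((rho n : ℝ) / n * (ε₅ ^ 2 / 9))) = rho n * (ε₅ ^ 4 / 9) := by
    field_simp
  have hfin : (rho n : ℝ) * (ε₅ ^ 4 / 9) ≤ rho n * (7 * ε₁ * Real.log 2) := by linarith
  have := le_of_mul_le_mul_left hfin hr0
  have : 0 < ε₁ * Real.log 2 := by positivity
  linarith
end

section
/- Let A be a finite set with |A| ≥ 2, let κ ∈ (0, 1/2), and let D be a probability distribution on A. If the Shannon entropy satisfies H(D) ≥ κ·log₂|A| − κ·log₂ κ − (1−κ)·log₂(1−κ), then max_{a ∈ A} D(a) ≤ 1 − κ. -/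
open Finset

/-!
The proof is by Gibbs' inequality. If some `a` had mass `p = D a > 1 - κ`, compare `D` with the
sub-probability weights `1 - κ` at `a` and `κ / |A|` at every other point. Working in nats, this gives
`H(D) ≤ -p log (1 - κ) - (1 - p) (log κ - log |A|)`. The assumed lower bound on `H(D)` exceeds
the right-hand side by `(p - (1 - κ)) (log |A| + log (1 - κ) - log κ)`, which is positive because
`κ < 1 / 2`: a contradiction.
-/

/-- Pointwise form of Gibbs' inequality, valid at `x = 0` because `Real.log 0 = 0`. -/
theorem gibbs_pointwise (x q : ℝ) (hx : 0 ≤ x) (hq : 0 < q) :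
    -(x * Real.log x) ≤ -(x * Real.log q) + q - x := by
  rcases hx.eq_or_lt with rfl | hx
  · simpa using hq.le
  · have h := Real.log_le_sub_one_of_pos (div_pos hq hx)
    rw [Real.log_div hq.ne' hx.ne'] at h
    have h2 := mul_le_mul_of_nonneg_left h hx.le
    have h3 : x * (q / x - 1) = q - x := by field_simp
    linarith

/-- if a distribution D on a finite set A (|A| ≥ 2) has base-2 Shannon
entropy at least κ·log₂|A| − κ·log₂ κ − (1−κ)·log₂(1−κ) for some κ ∈ (0, 1/2), then no
element has probability mass more than 1 − κ. -/
theorem statement_16 (A : Type) [Fintype A] (hA : 2 ≤ Fintype.card A)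
    (κ : ℝ) (hκ0 : 0 < κ) (hκ2 : κ < 1 / 2)
    (D : A → ℝ) (hD0 : ∀ a, 0 ≤ D a) (hD1 : ∑ a : A, D a = 1)
    (hH : (∑ a : A, -(D a * Real.logb 2 (D a))) ≥
      κ * Real.logb 2 (Fintype.card A) - κ * Real.logb 2 κ - (1 - κ) * Real.logb 2 (1 - κ)) :
    ∀ a : A, D a ≤ 1 - κ := by
  classical
  intro a
  by_contra! hlt
  set n : ℝ := (Fintype.card A : ℝ) with hn
  have hn2 : (2 : ℝ) ≤ n := by rw [hn]; exact_mod_cast hA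
  have hn0 : 0 < n := by linarith
  have hl2 : 0 < Real.log 2 := Real.log_pos (by norm_num)
  have hH' : κ * Real.log n - κ * Real.log κ - (1 - κ) * Real.log (1 - κ)
      ≤ ∑ b : A, -(D b * Real.log (D b)) := by
    have h := mul_le_mul_of_nonneg_right hH.le hl2.le
    have e : ∀ y : ℝ, Real.logb 2 y * Real.log 2 = Real.log y :=
      fun y => div_mul_cancel₀ _ hl2.ne'
    simpa only [Finset.sum_mul, sub_mul, neg_mul, mul_assoc, e] using h
  have hrest : ∑ b ∈ univ.erase a, D b = 1 - D a := by
    rw [← hD1, ← Finset.add_sum_erase univ D (mem_univ a)]; ring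
  have hcard : ((univ.erase a).card : ℝ) = n - 1 := by
    rw [card_erase_of_mem (mem_univ a), card_univ, Nat.cast_sub (by omega), Nat.cast_one]
  have hsum : ∑ b ∈ univ.erase a, -(D b * Real.log (D b))
      ≤ -((1 - D a) * Real.log (κ / n)) + (n - 1) * (κ / n) - (1 - D a) := by
    refine (Finset.sum_le_sum fun b _ =>
      gibbs_pointwise (D b) (κ / n) (hD0 b) (div_pos hκ0 hn0)).trans_eq ?_
    rw [sum_sub_distrib, sum_add_distrib, sum_neg_distrib, ← sum_mul, hrest, sum_const,
      nsmul_eq_mul, hcard]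
  have ha := gibbs_pointwise (D a) (1 - κ) (hD0 a) (by linarith)
  rw [← Finset.add_sum_erase univ _ (mem_univ a)] at hH'
  rw [Real.log_div hκ0.ne' hn0.ne'] at hsum
  have hmass : (n - 1) * (κ / n) ≤ κ := by
    rw [← mul_div_assoc, div_le_iff₀ hn0]; nlinarith
  have hlogn : 0 < Real.log n := Real.log_pos (by linarith)
  have hlogκ : Real.log κ < Real.log (1 - κ) := Real.log_lt_log hκ0 (by linarith)
  have hgap : 0 < (D a - (1 - κ)) * (Real.log n + Real.log (1 - κ) - Real.log κ) :=
    mul_pos (by linarith) (by linarith)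
  linarith
end

section
/- Let ξ be a 3CNF formula with m clauses C_1,…,C_m over variables x_1,…,x_n, each clause containing exactly 3 distinct variables, and suppose every assignment to x_1,…,x_n satisfies at most (1−ε)·m of the clauses. Define the clause/variable 2CSP ψ: its vertices are the m clauses (each to be labeled by an element of {0,1}³, an assignment to the clause's three variables) and the n variables (each to be labeled by an element of {0,1}); there is a constraint edge between clause C_i and variable x_j whenever x_j occurs in C_i, and the constraint is satisfied by a pair (a, b) iff the assignment a satisfies the clause C_i and a's value for x_j equals b. Then every labeling of the vertices of ψ satisfies at most a (1 − ε/3)-fraction of the constraint edges, i.e., OPT(ψ) ≤ 1 − ε/3. -/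
/-!
Decode a labeling `(a, b)` of the clause/variable game by forgetting `a` and keeping the assignment
`b` to the variables. A clause contributes at most `3` satisfied edges, and at most `2` unless `b`
satisfies it: if all three of its edges are satisfied, then `a i` satisfies the clause and agrees
with `b` on all its variables, so `b` satisfies it as well. Summing over the clauses, the number of
satisfied edges is at most `2m + (1 - ε)m = (1 - ε/3) · 3m`.
-/

open Finset

/-- A clause with polarities `s`, labeled by `a`, whose variables have values `c`, can have all
three of its edges satisfied only if `c` satisfies the clause. -/
lemma card_clause_edges_le (a s c : Fin 3 → Bool) :
    #{t : Fin 3 | (∃ u, a u = s u) ∧ a t = c t} ≤ 2 + if ∃ u, c u = s u then 1 else 0 := by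
  split_ifs with hc
  · exact Finset.card_le_univ _
  · have hlt : #{t : Fin 3 | (∃ u, a u = s u) ∧ a t = c t} < #(univ : Finset (Fin 3)) := by
      refine Finset.card_lt_card (Finset.filter_ssubset.2 ?_)
      by_contra! hall
      obtain ⟨u, hu⟩ := (hall 0 (mem_univ _)).1
      exact hc ⟨u, (hall u (mem_univ _)).2.symm.trans hu⟩
    simp only [Finset.card_univ, Fintype.card_fin] at hlt
    omega

/-- soundness of the clause/variable game: if every assignment satisfies
at most (1−ε)·m clauses of a 3CNF formula ξ (clauses `Cv i` with polarities `Cs i`, each on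
3 distinct variables), then every labeling (a, b) of the clause/variable 2CSP ψ — where a
labels each clause with an assignment to its 3 variables and b labels each variable with a
bit, and the edge (i, t) between clause i and its t-th variable is satisfied iff a i
satisfies clause i and agrees with b on that variable — satisfies at most a (1 − ε/3)
fraction of the 3m constraint edges. -/
theorem statement_17 (m nv : ℕ) (ε : ℝ)
    (Cv : Fin m → Fin 3 → Fin nv) (Cs : Fin m → Fin 3 → Bool)
    (hdist : ∀ i, Function.Injective (Cv i))
    (hsound : ∀ σ : Fin nv → Bool,
      ((Finset.univ.filter fun i : Fin m => ∃ t : Fin 3, σ (Cv i t) = Cs i t).card : ℝ) ≤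
        (1 - ε) * m) :
    ∀ (a : Fin m → Fin 3 → Bool) (b : Fin nv → Bool),
      (((Finset.univ : Finset (Fin m × Fin 3)).filter fun e =>
          (∃ t : Fin 3, a e.1 t = Cs e.1 t) ∧ a e.1 e.2 = b (Cv e.1 e.2)).card : ℝ) ≤
        (1 - ε / 3) * (3 * m) := by
  intro a b
  have hcount : #{e : Fin m × Fin 3 | (∃ t : Fin 3, a e.1 t = Cs e.1 t) ∧
      a e.1 e.2 = b (Cv e.1 e.2)} ≤ 2 * m + #{i : Fin m | ∃ t : Fin 3, b (Cv i t) = Cs i t} := by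
    calc
      _ = ∑ i : Fin m, #{t : Fin 3 | (∃ u, a i u = Cs i u) ∧ a i t = b (Cv i t)} := by
        simp only [Finset.card_filter, Fintype.sum_prod_type]
      _ ≤ ∑ i : Fin m, (2 + if ∃ u, b (Cv i u) = Cs i u then 1 else 0) :=
        Finset.sum_le_sum fun i _ => card_clause_edges_le (a i) (Cs i) fun t => b (Cv i t)
      _ = _ := by
        rw [Finset.sum_add_distrib, ← Finset.card_filter]
        simp [mul_comm]
  have hcast := (Nat.cast_le (α := ℝ)).2 hcount
  push_cast at hcast
  linarith [hsound b]
end
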